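/- Let u, w : ℝ³ → ℝ be smooth (C^∞) functions of the variables (t,x,y) and let λ ≠ 0 be a real constant. Suppose w satisfies the Lax system w_t = (u_x − λ)·w_x and w_y = λ⁻¹·u_y·w_x at every point, and suppose w_x is nowhere zero. Then u satisfies the 3D rdDym equation u_ty = u_x·u_xy − u_y·u_xx at every point. -/

import Mathlib

noncomputable section

/-- Partial derivative with respect to the first coordinate `t`. -/
def pt (u : ℝ × ℝ × ℝ → ℝ) : ℝ × ℝ × ℝ → ℝ :=
  fun p => deriv (fun s => u (s, p.2.1, p.2.2)) p.1

/-- Partial derivative with respect to the second coordinate `x`. -/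
def px (u : ℝ × ℝ × ℝ → ℝ) : ℝ × ℝ × ℝ → ℝ :=
  fun p => deriv (fun s => u (p.1, s, p.2.2)) p.2.1

/-- Partial derivative with respect to the third coordinate `y`. -/
def py (u : ℝ × ℝ × ℝ → ℝ) : ℝ × ℝ × ℝ → ℝ :=
  fun p => deriv (fun s => u (p.1, p.2.1, s)) p.2.2

/-- The 3D rdDym equation `u_ty = u_x·u_xy − u_y·u_xx`. -/
def rdDym (u : ℝ × ℝ × ℝ → ℝ) : Prop :=
  ∀ p, py (pt u) p = px u p * py (px u) p - py u p * px (px u) p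

/-- The linearization `ℓ(v) = v_ty − u_x·v_xy + u_y·v_xx − u_xy·v_x + u_xx·v_y = 0`
of the rdDym equation along `u`. -/
def linearized (u v : ℝ × ℝ × ℝ → ℝ) : Prop :=
  ∀ p, py (pt v) p - px u p * py (px v) p + py u p * px (px v) p
      - py (px u) p * px v p + px (px u) p * py v p = 0

/-!
The Lax system says that `w` is a first integral of both vector fields
`∂_t - (u_x - λ) ∂_x` and `∂_y - λ⁻¹ u_y ∂_x`, hence is annihilated by their Lie bracket, which is
`(D_y (u_x - λ) - D_t (λ⁻¹ u_y)) ∂_x`, where `D_t` and `D_y` are the derivatives along the two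
fields, so `w_x ≠ 0` forces its coefficient to vanish. Multiplied by `λ`, the coefficient is
`u_x u_xy - u_y u_xx - u_ty`: the terms carrying a bare `λ` cancel.
-/

open scoped Topology

section DirectionalDerivatives

variable {𝕜 E F : Type*} [NontriviallyNormedField 𝕜]
  [NormedAddCommGroup E] [NormedSpace 𝕜 E] [NormedAddCommGroup F] [NormedSpace 𝕜 F]
  {f : E → F} {a b : E → 𝕜} {p : E} {n : WithTop ℕ∞}

theorem eventually_differentiableAt (hf : ContDiffAt 𝕜 n f p) (hn : n ≠ 0) :
    ∀ᶠ q in 𝓝 p, DifferentiableAt 𝕜 f q :=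
  ((hf.of_le (ENat.one_le_iff_ne_zero_withTop.mpr hn)).eventually (by simp)).mono
    fun _ hq => hq.differentiableAt one_ne_zero

theorem differentiableAt_fderiv_apply (hf : ContDiffAt 𝕜 2 f p) (v : E) :
    DifferentiableAt 𝕜 (fun q => fderiv 𝕜 f q v) p :=
  ((hf.fderiv_right (m := 1) le_rfl).differentiableAt one_ne_zero).clm_apply
    (differentiableAt_const v)

theorem fderiv_fderiv_apply_comm (hf : ContDiffAt 𝕜 n f p) (hn : minSmoothness 𝕜 2 ≤ n)
    (v z : E) :
    fderiv 𝕜 (fun q => fderiv 𝕜 f q v) p z = fderiv 𝕜 (fun q => fderiv 𝕜 f q z) p v := by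
  have hbracket := VectorField.fderiv_apply_lieBracket hf hn
    (differentiableAt_const v) (differentiableAt_const z)
  exact sub_eq_zero.mp (by simpa [VectorField.lieBracket] using hbracket.symm)

theorem lieBracket_sub_smul_const (ha : DifferentiableAt 𝕜 a p) (hb : DifferentiableAt 𝕜 b p)
    (v z e : E) :
    VectorField.lieBracket 𝕜 (fun q => v - a q • e) (fun q => z - b q • e) p =
      (fderiv 𝕜 a p (z - b p • e) - fderiv 𝕜 b p (v - a p • e)) • e := by
  simp only [VectorField.lieBracket, fderiv_const_sub, fderiv_smul_const ha, fderiv_smul_const hb,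
    neg_apply, ContinuousLinearMap.smulRight_apply]
  module

theorem fderiv_apply_eq_of_common_firstIntegral {v z e : E}
    (hf : ContDiffAt 𝕜 n f p) (hn : minSmoothness 𝕜 2 ≤ n)
    (ha : DifferentiableAt 𝕜 a p) (hb : DifferentiableAt 𝕜 b p)
    (hfv : ∀ᶠ q in 𝓝 p, fderiv 𝕜 f q (v - a q • e) = 0)
    (hfz : ∀ᶠ q in 𝓝 p, fderiv 𝕜 f q (z - b q • e) = 0)
    (hfe : fderiv 𝕜 f p e ≠ 0) :
    fderiv 𝕜 a p (z - b p • e) = fderiv 𝕜 b p (v - a p • e) := by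
  have hbracket : fderiv 𝕜 f p
      (VectorField.lieBracket 𝕜 (fun q => v - a q • e) (fun q => z - b q • e) p) = 0 := by
    rw [VectorField.fderiv_apply_lieBracket hf hn (by fun_prop) (by fun_prop),
      Filter.EventuallyEq.fderiv_eq hfv, Filter.EventuallyEq.fderiv_eq hfz]
    simp
  rw [lieBracket_sub_smul_const ha hb, map_smul] at hbracket
  exact sub_eq_zero.mp ((smul_eq_zero.mp hbracket).resolve_right hfe)

end DirectionalDerivatives

section PartialDerivatives

variable {u : ℝ × ℝ × ℝ → ℝ} {p : ℝ × ℝ × ℝ} {n : WithTop ℕ∞}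

theorem pt_eq_fderiv (hu : DifferentiableAt ℝ u p) : pt u p = fderiv ℝ u p (1, 0, 0) := by
  have hline : HasDerivAt (fun s : ℝ => (s, p.2.1, p.2.2)) (1, 0, 0) p.1 :=
    (hasDerivAt_id _).prodMk ((hasDerivAt_const _ _).prodMk (hasDerivAt_const _ _))
  exact (hu.hasFDerivAt.comp_hasDerivAt p.1 hline).deriv

theorem px_eq_fderiv (hu : DifferentiableAt ℝ u p) : px u p = fderiv ℝ u p (0, 1, 0) := by
  have hline : HasDerivAt (fun s : ℝ => (p.1, s, p.2.2)) (0, 1, 0) p.2.1 :=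
    (hasDerivAt_const _ _).prodMk ((hasDerivAt_id _).prodMk (hasDerivAt_const _ _))
  exact (hu.hasFDerivAt.comp_hasDerivAt p.2.1 hline).deriv

theorem py_eq_fderiv (hu : DifferentiableAt ℝ u p) : py u p = fderiv ℝ u p (0, 0, 1) := by
  have hline : HasDerivAt (fun s : ℝ => (p.1, p.2.1, s)) (0, 0, 1) p.2.2 :=
    (hasDerivAt_const _ _).prodMk ((hasDerivAt_const _ _).prodMk (hasDerivAt_id _))
  exact (hu.hasFDerivAt.comp_hasDerivAt p.2.2 hline).deriv

theorem pt_eventuallyEq_fderiv (hu : ContDiffAt ℝ n u p) (hn : n ≠ 0) :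
    pt u =ᶠ[𝓝 p] fun q => fderiv ℝ u q (1, 0, 0) :=
  (eventually_differentiableAt hu hn).mono fun _ => pt_eq_fderiv

theorem px_eventuallyEq_fderiv (hu : ContDiffAt ℝ n u p) (hn : n ≠ 0) :
    px u =ᶠ[𝓝 p] fun q => fderiv ℝ u q (0, 1, 0) :=
  (eventually_differentiableAt hu hn).mono fun _ => px_eq_fderiv

theorem py_eventuallyEq_fderiv (hu : ContDiffAt ℝ n u p) (hn : n ≠ 0) :
    py u =ᶠ[𝓝 p] fun q => fderiv ℝ u q (0, 0, 1) :=
  (eventually_differentiableAt hu hn).mono fun _ => py_eq_fderiv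

theorem px_sub_const (u : ℝ × ℝ × ℝ → ℝ) (c : ℝ) (p : ℝ × ℝ × ℝ) :
    px (fun q => u q - c) p = px u p :=
  deriv_sub_const _

theorem py_sub_const (u : ℝ × ℝ × ℝ → ℝ) (c : ℝ) (p : ℝ × ℝ × ℝ) :
    py (fun q => u q - c) p = py u p :=
  deriv_sub_const _

theorem pt_const_mul (c : ℝ) (u : ℝ × ℝ × ℝ → ℝ) (p : ℝ × ℝ × ℝ) :
    pt (fun q => c * u q) p = c * pt u p :=
  deriv_const_mul_field _

theorem px_const_mul (c : ℝ) (u : ℝ × ℝ × ℝ → ℝ) (p : ℝ × ℝ × ℝ) :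
    px (fun q => c * u q) p = c * px u p :=
  deriv_const_mul_field _

theorem differentiableAt_pt (hu : ContDiffAt ℝ 2 u p) : DifferentiableAt ℝ (pt u) p :=
  (differentiableAt_fderiv_apply hu _).congr_of_eventuallyEq
    (pt_eventuallyEq_fderiv hu two_ne_zero)

theorem differentiableAt_px (hu : ContDiffAt ℝ 2 u p) : DifferentiableAt ℝ (px u) p :=
  (differentiableAt_fderiv_apply hu _).congr_of_eventuallyEq
    (px_eventuallyEq_fderiv hu two_ne_zero)

theorem differentiableAt_py (hu : ContDiffAt ℝ 2 u p) : DifferentiableAt ℝ (py u) p :=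
  (differentiableAt_fderiv_apply hu _).congr_of_eventuallyEq
    (py_eventuallyEq_fderiv hu two_ne_zero)

theorem py_pt_comm (hu : ContDiffAt ℝ 2 u p) : py (pt u) p = pt (py u) p := by
  rw [py_eq_fderiv (differentiableAt_pt hu), pt_eq_fderiv (differentiableAt_py hu),
    (pt_eventuallyEq_fderiv hu two_ne_zero).fderiv_eq,
    (py_eventuallyEq_fderiv hu two_ne_zero).fderiv_eq]
  exact fderiv_fderiv_apply_comm hu (by simp) _ _

theorem py_px_comm (hu : ContDiffAt ℝ 2 u p) : py (px u) p = px (py u) p := by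
  rw [py_eq_fderiv (differentiableAt_px hu), px_eq_fderiv (differentiableAt_py hu),
    (px_eventuallyEq_fderiv hu two_ne_zero).fderiv_eq,
    (py_eventuallyEq_fderiv hu two_ne_zero).fderiv_eq]
  exact fderiv_fderiv_apply_comm hu (by simp) _ _

theorem py_sub_mul_px_eq_pt_sub_mul_px {a b w : ℝ × ℝ × ℝ → ℝ}
    (ha : DifferentiableAt ℝ a p) (hb : DifferentiableAt ℝ b p) (hw : ContDiffAt ℝ 2 w p)
    (hwt : ∀ᶠ q in 𝓝 p, pt w q = a q * px w q) (hwy : ∀ᶠ q in 𝓝 p, py w q = b q * px w q)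
    (hwx : px w p ≠ 0) :
    py a p - b p * px a p = pt b p - a p * px b p := by
  have hwpt := pt_eventuallyEq_fderiv hw two_ne_zero
  have hwpx := px_eventuallyEq_fderiv hw two_ne_zero
  have hwpy := py_eventuallyEq_fderiv hw two_ne_zero
  have hwV : ∀ᶠ q in 𝓝 p, fderiv ℝ w q ((1, 0, 0) - a q • (0, 1, 0)) = 0 := by
    filter_upwards [hwpt, hwpx, hwt] with q hqpt hqpx hqt
    rw [map_sub, map_smul, ← hqpt, ← hqpx, hqt, smul_eq_mul, sub_self]
  have hwZ : ∀ᶠ q in 𝓝 p, fderiv ℝ w q ((0, 0, 1) - b q • (0, 1, 0)) = 0 := by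
    filter_upwards [hwpy, hwpx, hwy] with q hqpy hqpx hqy
    rw [map_sub, map_smul, ← hqpy, ← hqpx, hqy, smul_eq_mul, sub_self]
  rw [hwpx.self_of_nhds] at hwx
  have hcompat := fderiv_apply_eq_of_common_firstIntegral hw (by simp) ha hb hwV hwZ hwx
  simpa only [map_sub, map_smul, smul_eq_mul, ← pt_eq_fderiv hb, ← px_eq_fderiv ha,
    ← px_eq_fderiv hb, ← py_eq_fderiv ha] using hcompat

end PartialDerivatives

theorem rdDym_of_lax_general (u w : ℝ × ℝ × ℝ → ℝ) (lam : ℝ)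
    (hu : ContDiff ℝ 2 u) (hw : ContDiff ℝ 2 w) (hlam : lam ≠ 0)
    (hwt : ∀ p, pt w p = (px u p - lam) * px w p)
    (hwy : ∀ p, py w p = lam⁻¹ * py u p * px w p)
    (hwx : ∀ p, px w p ≠ 0) :
    rdDym u := by
  intro p
  have hup : ContDiffAt ℝ 2 u p := hu.contDiffAt
  have hcompat := py_sub_mul_px_eq_pt_sub_mul_px ((differentiableAt_px hup).sub_const lam)
    ((differentiableAt_py hup).const_mul lam⁻¹) hw.contDiffAt (.of_forall hwt) (.of_forall hwy)
    (hwx p)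
  rw [py_sub_const, px_sub_const, pt_const_mul, px_const_mul, ← py_pt_comm hup,
    ← py_px_comm hup] at hcompat
  field_simp at hcompat
  linear_combination -hcompat

/-- If `w` satisfies the Lax system `w_t = (u_x − λ) w_x`,
`w_y = λ⁻¹ u_y w_x` with `λ ≠ 0` and `w_x` nowhere zero, then `u` satisfies
the 3D rdDym equation. -/
theorem rdDym_of_lax (u w : ℝ × ℝ × ℝ → ℝ) (lam : ℝ)
    (hu : ContDiff ℝ (⊤ : ℕ∞) u) (hw : ContDiff ℝ (⊤ : ℕ∞) w) (hlam : lam ≠ 0)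
    (hwt : ∀ p, pt w p = (px u p - lam) * px w p)
    (hwy : ∀ p, py w p = lam⁻¹ * py u p * px w p)
    (hwx : ∀ p, px w p ≠ 0) :
    rdDym u :=
  rdDym_of_lax_general u w lam (contDiff_infty.mp hu 2) (contDiff_infty.mp hw 2) hlam hwt hwy hwx
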